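/- Assume that M and the quotient M/Σ_I for every subset I ⊆ {1,…,n} are projective R-modules, and that the collection M_1,…,M_n is distributive. Then for every I ⊆ {1,…,n} there is an isomorphism of R-modules (L^I of the collection M_1,…,M_n)^* ≅ L^{{1,…,n}∖I} of the collection M_1^∨,…,M_n^∨ of submodules of M^*; explicitly, Hom_R( Π_{{1,…,n}∖I}/(Π_{{1,…,n}∖I} ∩ Σ_I), R ) ≅ (⋂_{i∈I} M_i^∨)/( (⋂_{i∈I} M_i^∨) ∩ ∑_{i∉I} M_i^∨ ). -/

import Mathlib

/-!
STATEMENT 2: if `M` and all quotients `M/Σ_I` are projective and the collection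
`M_1, …, M_n` is distributive, then for every `I ⊆ {1,…,n}` there is an isomorphism of
`R`-modules `(L^I)^* ≅ L'^{{1,…,n}∖I}`, where `L^I = Π_{Iᶜ}/(Π_{Iᶜ} ∩ Σ_I)` for the
collection `M_1, …, M_n` and `L'` is formed from the collection `M_1^∨, …, M_n^∨` of
submodules of `M^*`; explicitly,
`Hom_R(Π_{Iᶜ}/(Π_{Iᶜ} ∩ Σ_I), R) ≅ (⋂_{i∈I} M_i^∨)/((⋂_{i∈I} M_i^∨) ∩ ∑_{i∉I} M_i^∨)`.
-/

variable {R M : Type*} [CommRing R] [AddCommGroup M] [Module R M]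

/-- `Σ_I = ∑_{i ∈ I} M_i` (with `Σ_∅ = 0`). -/
abbrev sigmaSub {n : ℕ} {M : Type*} [AddCommGroup M] [Module R M]
    (Mf : Fin n → Submodule R M) (I : Finset (Fin n)) : Submodule R M :=
  I.sup Mf

/-- `Π_I = ⋂_{i ∈ I} M_i` (with `Π_∅ = M`). -/
abbrev piSub {n : ℕ} {M : Type*} [AddCommGroup M] [Module R M]
    (Mf : Fin n → Submodule R M) (I : Finset (Fin n)) : Submodule R M :=
  I.inf Mf

/-- The collection `M_1, …, M_n` is distributive if the sublattice of the lattice of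
`R`-submodules of `M` generated by `{M_1, …, M_n}` under `+` (= `⊔`) and `∩` (= `⊓`)
is a distributive lattice. -/
def IsDistributiveFamily {n : ℕ} (Mf : Fin n → Submodule R M) : Prop :=
  ∀ a ∈ latticeClosure (Set.range Mf), ∀ b ∈ latticeClosure (Set.range Mf),
    ∀ c ∈ latticeClosure (Set.range Mf), a ⊓ (b ⊔ c) = (a ⊓ b) ⊔ (a ⊓ c)

/-- `L^I = Π_{{1,…,n}∖I} / (Π_{{1,…,n}∖I} ∩ Σ_I)`. -/
abbrev subquotL {n : ℕ} {M : Type*} [AddCommGroup M] [Module R M]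
    (Mf : Fin n → Submodule R M) (I : Finset (Fin n)) : Type _ :=
  ↥(piSub Mf Iᶜ) ⧸ Submodule.comap (piSub Mf Iᶜ).subtype (sigmaSub Mf I)

namespace Submodule

variable {R M N : Type*} [CommRing R] [AddCommGroup M] [Module R M] [AddCommGroup N] [Module R N]

/-- If `M ⧸ (A ⊔ B)` is projective, a linear map on `A` vanishing on `A ⊓ B` extends to `M`
by a map vanishing on `B`. -/
theorem exists_extension_of_projective_quotient_sup (A B : Submodule R M)
    [Module.Projective R (M ⧸ (A ⊔ B))] (f : A →ₗ[R] N)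
    (hf : ∀ x : A, (x : M) ∈ B → f x = 0) :
    ∃ g : M →ₗ[R] N, (∀ x : A, g x = f x) ∧ ∀ x ∈ B, g x = 0 := by
  obtain ⟨s, hs⟩ := Module.projective_lifting_property (A ⊔ B).mkQ LinearMap.id
    (mkQ_surjective _)
  have hs' (y : M ⧸ (A ⊔ B)) : (A ⊔ B).mkQ (s y) = y := LinearMap.congr_fun hs y
  let retraction : M →ₗ[R] ↥(A ⊔ B) :=
    LinearMap.codRestrict (A ⊔ B) (LinearMap.id - s ∘ₗ (A ⊔ B).mkQ) fun x => by
      rw [← Quotient.mk_eq_zero, ← mkQ_apply, LinearMap.sub_apply, map_sub,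
        LinearMap.comp_apply, hs', LinearMap.id_apply, sub_self]
  have hr (x : M) (hx : x ∈ A ⊔ B) : retraction x = ⟨x, hx⟩ := by
    apply Subtype.ext
    simp [retraction, (Quotient.mk_eq_zero (A ⊔ B)).2 hx]
  let fA : M →ₗ.[R] N := ⟨A, f⟩
  let zB : M →ₗ.[R] N := ⟨B, 0⟩
  have agree (x : fA.domain) (y : zB.domain) (hxy : (x : M) = y) : fA x = zB y :=
    hf x (hxy ▸ y.2)
  let extension : ↥(A ⊔ B) →ₗ[R] N := (fA.sup zB agree).toFun
  refine ⟨extension ∘ₗ retraction, fun x => ?_, fun x hx => ?_⟩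
  · rw [LinearMap.comp_apply, hr x (mem_sup_left x.2)]
    exact ((LinearPMap.left_le_sup fA zB agree).2 rfl).symm
  · rw [LinearMap.comp_apply, hr x (mem_sup_right hx)]
    exact ((LinearPMap.right_le_sup fA zB agree).2 (x := ⟨x, hx⟩) rfl).symm

theorem projective_quotient_inf (A B : Submodule R M) [Module.Projective R (M ⧸ A)]
    [Module.Projective R (M ⧸ B)] [Module.Projective R (M ⧸ (A ⊔ B))] :
    Module.Projective R (M ⧸ (A ⊓ B)) := by
  let f : M ⧸ (A ⊓ B) →ₗ[R] (M ⧸ A) × (M ⧸ B) :=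
    (factor inf_le_left).prod (factor inf_le_right)
  let g : (M ⧸ A) × (M ⧸ B) →ₗ[R] M ⧸ (A ⊔ B) :=
    (factor le_sup_left).coprod (-factor le_sup_right)
  have hf : Function.Injective f := by
    rw [← LinearMap.ker_eq_bot, LinearMap.ker_eq_bot']
    intro x hx
    obtain ⟨x, rfl⟩ := mkQ_surjective _ x
    simpa [f] using hx
  have hfg : Function.Exact f g := by
    rintro ⟨x, y⟩
    obtain ⟨x, rfl⟩ := mkQ_surjective _ x
    obtain ⟨y, rfl⟩ := mkQ_surjective _ y
    constructor
    · intro h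
      have hxy : x - y ∈ A ⊔ B := by
        rw [← Quotient.mk_eq_zero]
        simpa [g, sub_eq_add_neg] using h
      obtain ⟨a, ha, b, hb, hab⟩ := mem_sup.1 hxy
      refine ⟨(A ⊓ B).mkQ (x - a), Prod.ext ?_ ?_⟩
      · exact (Submodule.Quotient.eq A).2 (by simpa using ha)
      · refine (Submodule.Quotient.eq B).2 ?_
        rwa [LinearMap.id_apply, sub_right_comm, ← hab, add_sub_cancel_left]
    · rintro ⟨z, hz⟩
      obtain ⟨z, rfl⟩ := mkQ_surjective _ z
      rw [← hz]
      simp [f, g]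
  have hg : Function.Surjective g := fun z => by
    obtain ⟨z, rfl⟩ := mkQ_surjective _ z
    exact ⟨(A.mkQ z, 0), by simp [g]⟩
  have hsplit := Module.projective_lifting_property g LinearMap.id hg
  obtain ⟨l, hl⟩ := ((hfg.split_tfae hf hg).out 0 1).1 hsplit
  exact Module.Projective.of_split f l hl

theorem dualAnnihilator_inf_eq_of_projective_quotient_sup (A B : Submodule R M)
    [Module.Projective R (M ⧸ (A ⊔ B))] :
    (A ⊓ B).dualAnnihilator = A.dualAnnihilator ⊔ B.dualAnnihilator := by
  refine le_antisymm (fun f hf => ?_) (sup_dualAnnihilator_le_inf A B)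
  rw [mem_dualAnnihilator] at hf
  obtain ⟨g, hgA, hgB⟩ := exists_extension_of_projective_quotient_sup A B (f.domRestrict A)
    fun x hx => hf x ⟨x.2, hx⟩
  refine mem_sup.2 ⟨f - g, ?_, g, ?_, sub_add_cancel f g⟩
  · rw [mem_dualAnnihilator]
    intro x hx
    simp [hgA ⟨x, hx⟩]
  · rwa [mem_dualAnnihilator]

theorem dualAnnihilator_finset_sup {ι : Type*} (F : ι → Submodule R M) (I : Finset ι) :
    (I.sup F).dualAnnihilator = I.inf fun i => (F i).dualAnnihilator := by
  classical
  induction I using Finset.induction_on with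
  | empty => simp
  | insert i I _ ih => rw [Finset.sup_insert, Finset.inf_insert, dualAnnihilator_sup_eq, ih]

/-- The subquotient `P / (P ∩ S)` of `M`. -/
abbrev subquotient {M : Type*} [AddCommGroup M] [Module R M] (P S : Submodule R M) : Type _ :=
  P ⧸ S.comap P.subtype

/-- Restriction to `P` identifies `S^∨ / (S^∨ ∩ P^∨)` with the dual of `P / (P ∩ S)`. -/
theorem nonempty_dual_subquotient_equiv (P S : Submodule R M)
    [Module.Projective R (M ⧸ (P ⊔ S))] :
    Nonempty (Module.Dual R (subquotient P S) ≃ₗ[R]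
      subquotient S.dualAnnihilator P.dualAnnihilator) := by
  let Φ : S.dualAnnihilator →ₗ[R] Module.Dual R (P ⧸ S.comap P.subtype) :=
    ((S.comap P.subtype).mapQ S P.subtype le_rfl).dualMap ∘ₗ
      S.dualQuotEquivDualAnnihilator.symm.toLinearMap
  have hΦ (f : S.dualAnnihilator) (x : P) : Φ f ((S.comap P.subtype).mkQ x) = f.1 x := rfl
  have hsurj : Function.Surjective Φ := fun h => by
    obtain ⟨g, hgP, hgS⟩ := exists_extension_of_projective_quotient_sup P S
      (h ∘ₗ (S.comap P.subtype).mkQ) fun x hx => by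
        rw [LinearMap.comp_apply, mkQ_apply, (Quotient.mk_eq_zero (S.comap P.subtype)).2 hx, map_zero]
    refine ⟨⟨g, (mem_dualAnnihilator g).2 hgS⟩, ?_⟩
    apply linearMap_qext
    ext x
    exact hgP x
  have hker : LinearMap.ker Φ = P.dualAnnihilator.comap S.dualAnnihilator.subtype := by
    ext f
    rw [LinearMap.mem_ker, mem_comap, mem_dualAnnihilator]
    refine ⟨fun h x hx => ?_, fun h => ?_⟩
    · exact (hΦ f ⟨x, hx⟩).symm.trans (by rw [h, LinearMap.zero_apply])
    · apply linearMap_qext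
      ext x
      exact h x x.2
  exact ⟨((quotEquivOfEq _ _ hker).symm.trans (Φ.quotKerEquivOfSurjective hsurj)).symm⟩

end Submodule

namespace IsDistributiveFamily

variable {R M : Type*} [CommRing R] [AddCommGroup M] [Module R M] {n : ℕ}
  {Mf : Fin n → Submodule R M}

theorem sigmaSub_sup_inf (h : IsDistributiveFamily Mf) (I J : Finset (Fin n)) (j : Fin n) :
    sigmaSub Mf I ⊔ (Mf j ⊓ piSub Mf J) =
      (sigmaSub Mf I ⊔ Mf j) ⊓ (sigmaSub Mf I ⊔ piSub Mf J) := by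
  rcases I.eq_empty_or_nonempty with rfl | hI
  · simp
  rcases J.eq_empty_or_nonempty with rfl | hJ
  · simp
  have hL : IsSublattice (latticeClosure (Set.range Mf)) := isSublattice_latticeClosure
  have hmem (i : Fin n) : Mf i ∈ latticeClosure (Set.range Mf) :=
    subset_latticeClosure ⟨i, rfl⟩
  have ha : sigmaSub Mf I ∈ latticeClosure (Set.range Mf) :=
    hL.supClosed.finsetSup_mem hI fun i _ => hmem i
  have hb : piSub Mf J ∈ latticeClosure (Set.range Mf) :=
    hL.infClosed.finsetInf_mem hJ fun i _ => hmem i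
  rw [h _ (hL.supClosed ha (hmem j)) _ ha _ hb, inf_comm _ (sigmaSub Mf I), inf_sup_self,
    inf_comm (sigmaSub Mf I ⊔ Mf j), h _ hb _ ha _ (hmem j), ← sup_assoc, inf_comm _ (sigmaSub Mf I),
    sup_inf_self, inf_comm]

theorem projective_quotient_sigmaSub_sup_piSub (h : IsDistributiveFamily Mf)
    (hQ : ∀ I : Finset (Fin n), Module.Projective R (M ⧸ sigmaSub Mf I))
    (I J : Finset (Fin n)) : Module.Projective R (M ⧸ (sigmaSub Mf I ⊔ piSub Mf J)) := by
  induction J using Finset.induction_on generalizing I with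
  | empty =>
    have : Subsingleton (M ⧸ (sigmaSub Mf I ⊔ piSub Mf ∅)) :=
      Submodule.Quotient.subsingleton_iff.2 (by simp)
    infer_instance
  | insert j J _ ih =>
    have hins : sigmaSub Mf (insert j I) = sigmaSub Mf I ⊔ Mf j := by
      rw [sigmaSub, Finset.sup_insert, sup_comm]
    have hA := hQ (insert j I)
    have hB := ih I
    have hAB := ih (insert j I)
    rw [hins] at hA hAB
    rw [sup_assoc, sup_sup_distrib_left] at hAB
    rw [piSub, Finset.inf_insert, h.sigmaSub_sup_inf]
    exact Submodule.projective_quotient_inf _ _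

theorem dualAnnihilator_piSub (h : IsDistributiveFamily Mf)
    (hQ : ∀ I : Finset (Fin n), Module.Projective R (M ⧸ sigmaSub Mf I))
    (J : Finset (Fin n)) :
    (piSub Mf J).dualAnnihilator = sigmaSub (fun i => (Mf i).dualAnnihilator) J := by
  induction J using Finset.induction_on with
  | empty => simp
  | insert j J _ ih =>
    have hP := h.projective_quotient_sigmaSub_sup_piSub hQ {j} J
    rw [sigmaSub, Finset.sup_singleton] at hP
    rw [piSub, sigmaSub, Finset.inf_insert, Finset.sup_insert,
      Submodule.dualAnnihilator_inf_eq_of_projective_quotient_sup, ih]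

end IsDistributiveFamily

theorem statement2 {n : ℕ} (hn : 1 ≤ n) (Mf : Fin n → Submodule R M)
    (hM : Module.Projective R M)
    (hQ : ∀ I : Finset (Fin n), Module.Projective R (M ⧸ sigmaSub Mf I))
    (hdist : IsDistributiveFamily Mf) :
    ∀ I : Finset (Fin n),
      Nonempty (Module.Dual R (subquotL Mf I) ≃ₗ[R]
        subquotL (fun i => (Mf i).dualAnnihilator) Iᶜ) := by
  intro I
  have hP := hdist.projective_quotient_sigmaSub_sup_piSub hQ I Iᶜ
  rw [sup_comm] at hP
  have equiv := Submodule.nonempty_dual_subquotient_equiv (piSub Mf Iᶜ) (sigmaSub Mf I)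
  rw [hdist.dualAnnihilator_piSub hQ, Submodule.dualAnnihilator_finset_sup] at equiv
  unfold subquotL
  rwa [compl_compl]
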